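/- Let k be a commutative ring with unity, N ≥ 2 an integer, and q ∈ k a primitive N-th root of unity. For every integer t with 1 ≤ t ≤ N one has Σ_{j=0}^{t} (−1)^j · q^{j(j−1)/2} · [t choose j] = 0 in k. -/

import Mathlib

/-- The `q`-integer `[m] = 1 + q + ⋯ + q^{m-1}`. -/
def qInt {k : Type*} [CommRing k] (q : k) (m : ℕ) : k := ∑ i ∈ Finset.range m, q ^ i

/-- The `q`-factorial `[m]! = [m][m-1]⋯[1]`, with `[0]! = 1`. -/
def qFact {k : Type*} [CommRing k] (q : k) (m : ℕ) : k := ∏ i ∈ Finset.range m, qInt q (i + 1)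

/-- `QBinomSpec q N m l c` says that `c` is *the* `q`-binomial coefficient `[m choose l]`
(for `0 ≤ l ≤ m ≤ N`): in the special cases `(l,m) = (0,N), (N,N)` it is `1` by convention,
and otherwise it is characterized by `[l]! ⬝ [m-l]! ⬝ c = [m]!`. -/
def QBinomSpec {k : Type*} [CommRing k] (q : k) (N m l : ℕ) (c : k) : Prop :=
  ((m = N ∧ (l = 0 ∨ l = N)) → c = 1) ∧
  (¬(m = N ∧ (l = 0 ∨ l = N)) → qFact q l * qFact q (m - l) * c = qFact q m)

/-- Gaussian binomials, by the `q`-Pascal recursion. -/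
def gaussB {k : Type*} [CommRing k] (q : k) : ℕ → ℕ → k
  | _, 0 => 1
  | 0, _ + 1 => 0
  | n + 1, j + 1 => gaussB q n j + q ^ (j + 1) * gaussB q n (j + 1)

theorem gaussB_zero {k : Type*} [CommRing k] (q : k) (n : ℕ) : gaussB q n 0 = 1 := by
  cases n <;> simp [gaussB]

theorem gaussB_gt {k : Type*} [CommRing k] (q : k) (n : ℕ) :
    ∀ j, n < j → gaussB q n j = 0 := by
  induction n with
  | zero => intro j hj; cases j with
    | zero => omega
    | succ j => simp [gaussB]
  | succ n ih => intro j hj; cases j with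
    | zero => omega
    | succ j => simp [gaussB, ih j (by omega), ih (j + 1) (by omega)]

theorem gaussB_self {k : Type*} [CommRing k] (q : k) (n : ℕ) : gaussB q n n = 1 := by
  induction n with
  | zero => simp [gaussB]
  | succ n ih => simp [gaussB, ih, gaussB_gt q n (n + 1) (by omega)]

theorem qFact_succ' {k : Type*} [CommRing k] (q : k) (n : ℕ) :
    qFact q (n + 1) = qFact q n * qInt q (n + 1) := by
  simp [qFact, Finset.prod_range_succ]

theorem qInt_add' {k : Type*} [CommRing k] (q : k) (a b : ℕ) :
    qInt q (a + b) = qInt q a + q ^ a * qInt q b := by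
  simp [qInt, Finset.sum_range_add, Finset.mul_sum, pow_add]

theorem gaussB_fact {k : Type*} [CommRing k] (q : k) (s : ℕ) :
    ∀ l m, l + m = s → qFact q l * qFact q m * gaussB q s l = qFact q s := by
  induction s with
  | zero =>
    intro l m h
    obtain ⟨rfl, rfl⟩ : l = 0 ∧ m = 0 := by omega
    simp [gaussB, qFact]
  | succ s ih =>
    intro l m h
    rcases l with _ | l
    · obtain rfl : m = s + 1 := by omega
      simp [gaussB, qFact]
    rcases m with _ | m
    · obtain rfl : l = s := by omega
      rw [gaussB_self]; simp [qFact]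
    have h1 := ih l (m + 1) (by omega)
    have h2 := ih (l + 1) m (by omega)
    have h3 : qInt q (s + 1) = qInt q (l + 1) + q ^ (l + 1) * qInt q (m + 1) := by
      rw [← qInt_add', h]
    rw [qFact_succ' q s, h3, gaussB]
    rw [qFact_succ' q m] at h1 ⊢
    rw [qFact_succ' q l] at h2 ⊢
    linear_combination qInt q (l + 1) * h1 + q ^ (l + 1) * qInt q (m + 1) * h2

theorem gaussB_alt {k : Type*} [CommRing k] (q : k) (n : ℕ) :
    ∑ j ∈ Finset.range (n + 1 + 1), (-1 : k) ^ j * q ^ (j * (j - 1) / 2) * gaussB q (n + 1) j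
      = 0 := by
  rw [Finset.sum_range_succ']
  have key : ∀ j, (-1 : k) ^ (j + 1) * q ^ ((j + 1) * (j + 1 - 1) / 2) * gaussB q (n + 1) (j + 1)
      = (fun j => (-1 : k) ^ j * q ^ (j * (j - 1) / 2) * q ^ j * gaussB q n j) (j + 1)
        - (fun j => (-1 : k) ^ j * q ^ (j * (j - 1) / 2) * q ^ j * gaussB q n j) j := by
    intro j
    have e : (j + 1) * (j + 1 - 1) / 2 = j * (j - 1) / 2 + j := by
      have := Nat.triangle_succ j
      simpa using this
    simp only [e, gaussB]
    ring
  rw [Finset.sum_congr rfl (fun j _ => key j), Finset.sum_range_sub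
    (fun j => (-1 : k) ^ j * q ^ (j * (j - 1) / 2) * q ^ j * gaussB q n j)]
  simp [gaussB_gt q n (n + 1) (by omega), gaussB_zero]

theorem qFact_nzd {k : Type*} [CommRing k] (N : ℕ) (q : k)
    (hq2 : ∀ l : ℕ, 1 ≤ l → l ≤ N - 1 → q ^ l - 1 ∈ nonZeroDivisors k)
    (m : ℕ) (hm : m ≤ N - 1) : qFact q m ∈ nonZeroDivisors k := by
  refine prod_mem fun i hi => ?_
  have hi := Finset.mem_range.mp hi
  have h := hq2 (i + 1) (by omega) (by omega)
  rw [← geom_sum_mul] at h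
  exact (mul_mem_nonZeroDivisors.mp h).1

/-- for `1 ≤ t ≤ N`,
`Σ_{j=0}^{t} (−1)^j ⬝ q^{j(j−1)/2} ⬝ [t choose j] = 0` in `k`. -/
theorem q_alternating_sum_eq_zero
    {k : Type*} [CommRing k] (N : ℕ) (hN : 2 ≤ N) (q : k)
    (hq1 : q ^ N = 1)
    (hq2 : ∀ l : ℕ, 1 ≤ l → l ≤ N - 1 → q ^ l - 1 ∈ nonZeroDivisors k)
    (t : ℕ) (ht1 : 1 ≤ t) (htN : t ≤ N)
    (c : ℕ → k) (hc : ∀ j ≤ t, QBinomSpec q N t j (c j)) :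
    ∑ j ∈ Finset.range (t + 1), (-1 : k) ^ j * q ^ (j * (j - 1) / 2) * c j = 0 := by
  have hcg : ∀ j ≤ t, c j = gaussB q t j := by
    intro j hj
    obtain ⟨h1, h2⟩ := hc j hj
    by_cases hs : t = N ∧ (j = 0 ∨ j = N)
    · rw [h1 hs]
      obtain ⟨rfl, rfl | rfl⟩ := hs
      · rw [gaussB_zero]
      · rw [gaussB_self]
    · have h3 := h2 hs
      rw [← gaussB_fact q t j (t - j) (by omega)] at h3
      have hz : qFact q j * qFact q (t - j) ∈ nonZeroDivisors k :=
        mul_mem (qFact_nzd N q hq2 _ (by omega)) (qFact_nzd N q hq2 _ (by omega))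
      exact (mul_cancel_left_mem_nonZeroDivisors hz).mp h3
  obtain ⟨n, rfl⟩ : ∃ n, t = n + 1 := ⟨t - 1, by omega⟩
  rw [← gaussB_alt q n]
  refine Finset.sum_congr rfl fun j hj => ?_
  rw [hcg j (by have := Finset.mem_range.mp hj; omega)]
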